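/- arXiv:1103.1141 — 2 statements merged into one kernel-verified Lean document; each statement's English description precedes it below -/
import Mathlib

section
/- Let H be a complex Hilbert space and let A₀ and B₀ assign to each nonempty bounded open interval I ⊆ (0,∞) subsets A₀(I), B₀(I) of B(H). Assume: (locality) A₀(I) and A₀(J) commute elementwise whenever I, J are disjoint, and likewise for B₀; (forward locality) A₀(I₁) and B₀(I₂) commute elementwise whenever I₂ > I₁. Fix R > 0 and for each double cone (I₁, I₂) of 𝔥_R set 𝔄(I₁,I₂) := (B₀(I₁) ∪ A₀(R²·I₂⁻¹))″. If (I₁, I₂) and (I₁', I₂') are double cones of 𝔥_R such that u < u' for all u ∈ I₁, u' ∈ I₁' and v < v' for all v ∈ I₂, v' ∈ I₂' (i.e. the double cones are spacelike separated), then 𝔄(I₁,I₂) and 𝔄(I₁',I₂') commute elementwise. -/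
/-!
The double commutants commute as soon as their generators do. With `≺` for precedence of intervals
and `φ I = R²·I⁻¹`, which reverses `≺`, a double cone is a pair with `φ I₂ ≺ I₁`, and spacelike
separation is `I₁ ≺ J₁`, `I₂ ≺ J₂`. All four pairs of generators are then ordered by the chain
`φ J₂ ≺ φ I₂ ≺ I₁ ≺ J₁`, in which no `B`-interval precedes an `A`-interval, and this is the
situation covered by locality and forward locality.
-/

section Nets

variable {ι M : Type*} [Mul M]

theorem commute_of_mem_centralizer_centralizer {S T : Set M}
    (hST : ∀ x ∈ S, ∀ y ∈ T, Commute x y) :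
    ∀ x ∈ S.centralizer.centralizer, ∀ y ∈ T.centralizer.centralizer, Commute x y := by
  intro x hx y hy
  have hyS : y ∈ S.centralizer := fun s hs => hy s fun t ht => (hST s hs t ht).symm
  exact (hx y hyS).symm

/-- `A` is forward local with respect to `B` if `A I` and `B J` commute elementwise whenever `J`
comes after `I` in the sense of `r`. Locality of a single net `A` is `ForwardLocal r A A`, since
of two disjoint intervals one comes after the other. -/
def ForwardLocal (r : ι → ι → Prop) (A B : ι → Set M) : Prop :=
  ∀ ⦃I J : ι⦄, r I J → ∀ x ∈ A I, ∀ y ∈ B J, Commute x y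

/-- The algebra `𝔄(I₁, I₂)` of a double cone, generated by `B I₁` and `A (φ I₂)`; on the
hyperboloid `𝔥_R`, `φ` is `I ↦ R²·I⁻¹`. -/
def doubleConeAlgebra (φ : ι → ι) (A B : ι → Set M) (I₁ I₂ : ι) : Set M :=
  (B I₁ ∪ A (φ I₂)).centralizer.centralizer

theorem stmt_1_general {r : ι → ι → Prop} [IsTrans ι r] {φ : ι → ι}
    (hφ : ∀ ⦃I J : ι⦄, r I J → r (φ J) (φ I)) {A B : ι → Set M}
    (hA : ForwardLocal r A A) (hB : ForwardLocal r B B) (hAB : ForwardLocal r A B)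
    {I₁ I₂ J₁ J₂ : ι} (hcone : r (φ I₂) I₁) (h₁ : r I₁ J₁) (h₂ : r I₂ J₂) :
    ∀ x ∈ doubleConeAlgebra φ A B I₁ I₂, ∀ y ∈ doubleConeAlgebra φ A B J₁ J₂, Commute x y := by
  apply commute_of_mem_centralizer_centralizer
  rintro x (hx | hx) y (hy | hy)
  · exact hB h₁ x hx y hy
  · exact (hAB (_root_.trans (hφ h₂) hcone) y hy x hx).symm
  · exact hAB (_root_.trans hcone h₁) x hx y hy
  · exact (hA (hφ h₂) y hy x hx).symm

end Nets

/-- A bounded open interval `(left, right)` in the positive half-line, given by its endpoints. It is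
nonempty when `K` is densely ordered. -/
structure PosInterval (K : Type*) [Zero K] [LT K] where
  left : K
  right : K
  left_pos : 0 < left
  left_lt_right : left < right

namespace PosInterval

section Precedes

variable {K : Type*} [Zero K] [Preorder K]

theorem right_pos (I : PosInterval K) : 0 < I.right :=
  I.left_pos.trans I.left_lt_right

/-- The relation `I < J` between open intervals, stated for endpoints: when `K` is densely ordered,
it says that every point of `I` is less than every point of `J`. -/
def Precedes (I J : PosInterval K) : Prop :=
  I.right ≤ J.left

instance : IsTrans (PosInterval K) Precedes where
  trans _ J _ hIJ hJK := (hIJ.trans J.left_lt_right.le).trans hJK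

end Precedes

variable {K : Type*} [Field K] [LinearOrder K] [IsStrictOrderedRing K]

/-- The interval `ρ·I⁻¹ = {ρ / t | t ∈ I}`. -/
def smulInv (ρ : K) (hρ : 0 < ρ) (I : PosInterval K) : PosInterval K where
  left := ρ / I.right
  right := ρ / I.left
  left_pos := div_pos hρ I.right_pos
  left_lt_right := div_lt_div_of_pos_left hρ I.left_pos I.left_lt_right

theorem Precedes.smulInv {ρ : K} (hρ : 0 < ρ) {I J : PosInterval K} (h : I.Precedes J) :
    (J.smulInv ρ hρ).Precedes (I.smulInv ρ hρ) :=
  div_le_div_of_nonneg_left hρ.le I.right_pos h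

theorem smulInv_precedes_iff {ρ : K} (hρ : 0 < ρ) {I J : PosInterval K} :
    (I.smulInv ρ hρ).Precedes J ↔ ρ ≤ J.left * I.left :=
  div_le_iff₀ I.left_pos

end PosInterval

/-- Locality of the boundary QFT net `𝔄(I₁,I₂) = (B₀(I₁) ∪ A₀(R²·I₂⁻¹))''` on the
interior of the Lorentz hyperboloid `𝔥_R`.  Bounded open intervals `(a,b) ⊆ (0,∞)`
are encoded by their endpoints; `R²·(c,d)⁻¹ = (R²/d, R²/c)`; a double cone of `𝔥_R`
is a pair of intervals `((a,b),(c,d))` with `a·c > R²`; the double commutant is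
`Set.centralizer ∘ Set.centralizer`. -/
theorem stmt_1 {H : Type*} [NormedAddCommGroup H] [InnerProductSpace ℂ H]
    (A₀ B₀ : ℝ → ℝ → Set (H →L[ℂ] H)) (R : ℝ) (hR : 0 < R)
    -- locality of A₀ : algebras of disjoint intervals commute elementwise
    (hlocA : ∀ a b c d : ℝ, 0 < a → a < b → 0 < c → c < d → (b ≤ c ∨ d ≤ a) →
      ∀ x ∈ A₀ a b, ∀ y ∈ A₀ c d, x * y = y * x)
    -- locality of B₀
    (hlocB : ∀ a b c d : ℝ, 0 < a → a < b → 0 < c → c < d → (b ≤ c ∨ d ≤ a) →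
      ∀ x ∈ B₀ a b, ∀ y ∈ B₀ c d, x * y = y * x)
    -- forward locality : A₀(I₁) commutes with B₀(I₂) whenever I₂ > I₁
    (hfwd : ∀ a b c d : ℝ, 0 < a → a < b → 0 < c → c < d → b ≤ c →
      ∀ x ∈ A₀ a b, ∀ y ∈ B₀ c d, x * y = y * x)
    -- two spacelike separated double cones ((a,b),(c,d)) and ((a',b'),(c',d')) of 𝔥_R
    (a b c d a' b' c' d' : ℝ)
    (ha : 0 < a) (hab : a < b) (hc : 0 < c) (hcd : c < d) (hdc : R ^ 2 < a * c)
    (ha' : 0 < a') (hab' : a' < b') (hc' : 0 < c') (hcd' : c' < d') (hdc' : R ^ 2 < a' * c')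
    (hsp₁ : b ≤ a') (hsp₂ : d ≤ c') :
    ∀ x ∈ Set.centralizer (Set.centralizer (B₀ a b ∪ A₀ (R ^ 2 / d) (R ^ 2 / c))),
    ∀ y ∈ Set.centralizer (Set.centralizer (B₀ a' b' ∪ A₀ (R ^ 2 / d') (R ^ 2 / c'))),
      x * y = y * x := by
  have hA : ForwardLocal PosInterval.Precedes
      (fun I => A₀ I.left I.right) (fun I => A₀ I.left I.right) := fun I J h =>
    hlocA _ _ _ _ I.left_pos I.left_lt_right J.left_pos J.left_lt_right (.inl h)
  have hB : ForwardLocal PosInterval.Precedes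
      (fun I => B₀ I.left I.right) (fun I => B₀ I.left I.right) := fun I J h =>
    hlocB _ _ _ _ I.left_pos I.left_lt_right J.left_pos J.left_lt_right (.inl h)
  have hAB : ForwardLocal PosInterval.Precedes
      (fun I => A₀ I.left I.right) (fun I => B₀ I.left I.right) := fun I J h =>
    hfwd _ _ _ _ I.left_pos I.left_lt_right J.left_pos J.left_lt_right h
  have hR2 : 0 < R ^ 2 := pow_pos hR 2
  exact stmt_1_general (I₁ := ⟨a, b, ha, hab⟩) (I₂ := ⟨c, d, hc, hcd⟩)
    (J₁ := ⟨a', b', ha', hab'⟩) (J₂ := ⟨c', d', hc', hcd'⟩)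
    (fun _ _ => PosInterval.Precedes.smulInv hR2) hA hB hAB
    ((PosInterval.smulInv_precedes_iff hR2).2 hdc.le) hsp₁ hsp₂
end

section
/- Let H be a complex Hilbert space, H₀ ⊆ H a closed real-linear subspace, and T, D : ℝ → B(H) families of unitary operators with: T(s + t) = T(s)·T(t) for all s, t; T(t)·H₀ ⊆ H₀ for all t ≥ 0; D(s)·H₀ = H₀ for all s ∈ ℝ; D(s)·T(t)·D(s)⁻¹ = T(e^{2πs}·t) for all s, t ∈ ℝ; and H₀ equals the topological closure of ⋃_{a > 0} T(a)·H₀. Let V be a unitary on H commuting with D(s) for every s ∈ ℝ and satisfying V·(T(1)·H₀) ⊆ T(1)·H₀. Then V·H₀ ⊆ H₀. (A unitary commuting with the modular group of H₀ that maps H₁ = T(1)H₀ into itself also maps H₀ into itself.) -/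
/-!
The relation `D(s) T(t) D(s)⁻¹ = T(e^{2πs} t)` and `D(s) H₀ = H₀` give
`T(e^{2πs}) H₀ = D(s) T(1) H₀`, so the subspaces `T(a) H₀` with `a > 0` are exactly the
translates `D(s) H₁` of the single subspace `H₁ = T(1) H₀`. As `V` commutes with `D`, it maps each
`D(s) H₁` into `D(s) H₀ = H₀`, and by continuity it maps the closure `H₀` of their union into `H₀`.
-/

open Set Function

theorem mapsTo_closure_iUnion_image {ι X Y : Type*} [TopologicalSpace X] [TopologicalSpace Y]
    {V : X → Y} {D : ι → X → X} {E : ι → Y → Y} {B : Set X} {C : Set Y}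
    (hV : Continuous V) (hC : IsClosed C) (hVDE : ∀ i, Semiconj V (D i) (E i))
    (hE : ∀ i, MapsTo (E i) C C) (hVB : MapsTo V B C) :
    MapsTo V (closure (⋃ i, D i '' B)) C := by
  refine MapsTo.closure_left (mapsTo_iUnion.2 fun i ↦ mapsTo_image_iff.2 ?_) hV hC
  rw [(hVDE i).comp_eq]
  exact (hE i).comp hVB

theorem range_exp_mul_mul_const {c r : ℝ} (hc : c ≠ 0) (hr : 0 < r) :
    range (fun s ↦ Real.exp (c * s) * r) = Ioi 0 := by
  refine Subset.antisymm (range_subset_iff.2 fun s ↦ by simp only [mem_Ioi]; positivity) ?_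
  intro a (ha : 0 < a)
  refine ⟨Real.log (a / r) / c, ?_⟩
  simp only [mul_div_cancel₀ _ hc, Real.exp_log (div_pos ha hr), div_mul_cancel₀ _ hr.ne']

theorem semiconjBy_mul_star_of_mem_unitary {R : Type*} [Monoid R] [StarMul R] {u : R}
    (hu : u ∈ unitary R) (x : R) : SemiconjBy u x (u * x * star u) :=
  Units.mk_semiconjBy (Unitary.toUnits ⟨u, hu⟩) x

section Dilation

variable {X : Type*} {T D : ℝ → X → X} {A : Set X} {c r : ℝ}

theorem biUnion_Ioi_image_eq_iUnion_image (hc : c ≠ 0) (hr : 0 < r)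
    (hDT : ∀ s, Semiconj (D s) (T r) (T (Real.exp (c * s) * r))) (hDA : ∀ s, D s '' A = A) :
    ⋃ a ∈ Ioi (0 : ℝ), T a '' A = ⋃ s, D s '' (T r '' A) := by
  rw [← range_exp_mul_mul_const hc hr, biUnion_range]
  refine iUnion_congr fun s ↦ ?_
  calc T (Real.exp (c * s) * r) '' A
      = T (Real.exp (c * s) * r) '' (D s '' A) := by rw [hDA s]
    _ = D s '' (T r '' A) := ((hDT s).set_image A).symm

theorem stmt_18_general [TopologicalSpace X] {V : X → X}
    (hA : IsClosed A) (hc : c ≠ 0) (hr : 0 < r)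
    (hDT : ∀ s, Semiconj (D s) (T r) (T (Real.exp (c * s) * r))) (hDA : ∀ s, D s '' A = A)
    (hgen : A ⊆ closure (⋃ a ∈ Ioi (0 : ℝ), T a '' A))
    (hV : Continuous V) (hVD : ∀ s, Function.Commute V (D s)) (hVT : MapsTo V (T r '' A) A) :
    MapsTo V A A := by
  rw [biUnion_Ioi_image_eq_iUnion_image hc hr hDT hDA] at hgen
  have hD : ∀ s, MapsTo (D s) A A := fun s ↦ mapsTo_iff_image_subset.2 (hDA s).subset
  exact (mapsTo_closure_iUnion_image hV hA hVD hD hVT).mono_left hgen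

end Dilation

/-- A unitary `V` commuting with the modular-type group `D` of `H₀` which maps
`H₁ = T(1)·H₀` into itself also maps `H₀` into itself, provided `H₀` is the closed
union of the `T(a)·H₀`, `a > 0`. -/
theorem stmt_18 {H : Type*} [NormedAddCommGroup H] [InnerProductSpace ℂ H] [CompleteSpace H]
    (H₀ : Submodule ℝ H) (hcl : IsClosed (H₀ : Set H))
    (T D : ℝ → (H →L[ℂ] H))
    (hTu : ∀ t : ℝ, T t ∈ unitary (H →L[ℂ] H))
    (hDu : ∀ s : ℝ, D s ∈ unitary (H →L[ℂ] H))
    (hTgrp : ∀ s t : ℝ, T (s + t) = T s * T t)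
    (hTH : ∀ t : ℝ, 0 ≤ t → (T t) '' (H₀ : Set H) ⊆ (H₀ : Set H))
    (hDH : ∀ s : ℝ, (D s) '' (H₀ : Set H) = (H₀ : Set H))
    (hcomm : ∀ s t : ℝ, D s * T t * star (D s) = T (Real.exp (2 * Real.pi * s) * t))
    (hgen : (H₀ : Set H) = closure (⋃ a ∈ Set.Ioi (0 : ℝ), (T a) '' (H₀ : Set H)))
    (V : H →L[ℂ] H) (hVu : V ∈ unitary (H →L[ℂ] H))
    (hVD : ∀ s : ℝ, V * D s = D s * V)
    (hV1 : V '' ((T 1) '' (H₀ : Set H)) ⊆ (T 1) '' (H₀ : Set H)) :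
    V '' (H₀ : Set H) ⊆ (H₀ : Set H) := by
  have hDT (s : ℝ) : Semiconj (D s) (T 1) (T (Real.exp (2 * Real.pi * s) * 1)) := by
    have h := semiconjBy_mul_star_of_mem_unitary (hDu s) (T 1)
    rw [hcomm] at h
    exact DFunLike.congr_fun h.eq
  have hVT : MapsTo V (T 1 '' H₀) H₀ :=
    mapsTo_iff_image_subset.2 (hV1.trans (hTH 1 zero_le_one))
  exact (stmt_18_general hcl Real.two_pi_pos.ne' one_pos hDT hDH hgen.subset V.continuous
    (fun s ↦ DFunLike.congr_fun (hVD s)) hVT).image_subset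
end
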